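/- arXiv:1508.00864 — 7 statements merged into one kernel-verified Lean document; each statement's English description precedes it below -/
import Mathlib

section
/- Let α be a type of states and let δp, δ'p, δe be relations on α and S, S' ⊆ α. Suppose: (1) S' is closed under δ'p ∪ δe, i.e. whenever s ∈ S' and (s,t) ∈ δ'p ∪ δe then t ∈ S'; (2) S' ⊆ S; (3) for all s,t ∈ S', if (s,t) ∈ δ'p then s,t ∈ S and (s,t) ∈ δp; (4) for every s₁, if there exist s₀ ∈ S' with (s₀,s₁) ∈ δe, some s₂ with (s₁,s₂) ∈ δe, and some s₃ with (s₁,s₃) ∈ δp, then there exists s₄ with (s₁,s₄) ∈ δ'p. Then every p'[]₂δe computation (taken with program transitions δ'p) whose initial state lies in S' is a p[]₂δe computation (taken with program transitions δp) whose initial state lies in S. -/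
variable {α : Type*}

/-- A `p[]₂δe` computation: an infinite sequence in which every step is a program
or environment step, and after an environment step the program executes if it can. -/
def Comp2 (δp δe : Set (α × α)) (σ : ℕ → α) : Prop :=
  (∀ i, (σ i, σ (i + 1)) ∈ δp ∪ δe) ∧
  (∀ i, (σ i, σ (i + 1)) ∈ δe → (∃ t, (σ (i + 1), t) ∈ δp) →
    (σ (i + 1), σ (i + 2)) ∈ δp)

theorem forall_mem_of_closed_of_step_mem {δ : Set (α × α)} {S : Set α} {σ : ℕ → α}
    (hclosed : ∀ s t, s ∈ S → (s, t) ∈ δ → t ∈ S)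
    (hstep : ∀ i, (σ i, σ (i + 1)) ∈ δ) (hinit : σ 0 ∈ S) : ∀ i, σ i ∈ S
  | 0 => hinit
  | i + 1 => hclosed _ _ (forall_mem_of_closed_of_step_mem hclosed hstep hinit i) (hstep i)

/- The fairness clause can only be violated by two consecutive environment steps, and there
enabledness of `δ'p` in the middle state forces the second one to be a program step as well. -/
theorem Comp2.of_program_imp_of_enabled_imp {δp δ'p δe : Set (α × α)} {σ : ℕ → α}
    (hσ : Comp2 δ'p δe σ)
    (hprogram : ∀ i, (σ i, σ (i + 1)) ∈ δ'p → (σ i, σ (i + 1)) ∈ δp)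
    (henabled : ∀ i, (σ i, σ (i + 1)) ∈ δe → (σ (i + 1), σ (i + 2)) ∈ δe →
      (∃ t, (σ (i + 1), t) ∈ δp) → ∃ t, (σ (i + 1), t) ∈ δ'p) :
    Comp2 δp δe σ := by
  obtain ⟨hstep, hfair⟩ := hσ
  refine ⟨fun i => (hstep i).imp_left (hprogram i), fun i henv hp => hprogram (i + 1) ?_⟩
  rcases hstep (i + 1) with hnext | hnext
  · exact hnext
  · exact hfair i henv (henabled i henv hnext hp)

theorem stmt0 (δp δ'p δe : Set (α × α)) (S S' : Set α)
    (h1 : ∀ s t, s ∈ S' → (s, t) ∈ δ'p ∪ δe → t ∈ S')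
    (h2 : S' ⊆ S)
    (h3 : ∀ s t, s ∈ S' → t ∈ S' → (s, t) ∈ δ'p → s ∈ S ∧ t ∈ S ∧ (s, t) ∈ δp)
    (h4 : ∀ s₁, (∃ s₀, s₀ ∈ S' ∧ (s₀, s₁) ∈ δe) → (∃ s₂, (s₁, s₂) ∈ δe) →
      (∃ s₃, (s₁, s₃) ∈ δp) → ∃ s₄, (s₁, s₄) ∈ δ'p) :
    ∀ σ : ℕ → α, Comp2 δ'p δe σ → σ 0 ∈ S' → Comp2 δp δe σ ∧ σ 0 ∈ S := by
  intro σ hσ hinit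
  have hmem : ∀ i, σ i ∈ S' := forall_mem_of_closed_of_step_mem h1 hσ.1 hinit
  have hprogram : ∀ i, (σ i, σ (i + 1)) ∈ δ'p → (σ i, σ (i + 1)) ∈ δp := fun i hi =>
    (h3 _ _ (hmem i) (hmem (i + 1)) hi).2.2
  have henabled : ∀ i, (σ i, σ (i + 1)) ∈ δe → (σ (i + 1), σ (i + 2)) ∈ δe →
      (∃ t, (σ (i + 1), t) ∈ δp) → ∃ t, (σ (i + 1), t) ∈ δ'p := fun i henv hnext =>
    h4 _ ⟨σ i, hmem i, henv⟩ ⟨σ (i + 2), hnext⟩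
  exact ⟨hσ.of_program_imp_of_enabled_imp hprogram henabled, h2 hinit⟩
end

section
/- Let α be a type of states and let δp, δ'p, δe be relations on α and S, S' ⊆ α. Suppose that every state s ∈ α has some outgoing transition in δ'p ∪ δe (no deadlocks), and that every p'[]₂δe computation (with program transitions δ'p) whose initial state lies in S' is a p[]₂δe computation (with program transitions δp) whose initial state lies in S. Then S' ⊆ S. -/
variable {α : Type*}

/-- A step in which the program has priority over the environment: it is a program step whenever
some program step is enabled at `s`. Unlike in `Comp2`, priority does not depend on the preceding
step, which makes the notion a relation on states. -/
def PriorityStep (δp δe : Set (α × α)) (s t : α) : Prop :=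
  (s, t) ∈ δp ∪ δe ∧ ((∃ u, (s, u) ∈ δp) → (s, t) ∈ δp)

theorem exists_priorityStep {δp δe : Set (α × α)} {s : α} (h : ∃ t, (s, t) ∈ δp ∪ δe) :
    ∃ t, PriorityStep δp δe s t := by
  by_cases hp : ∃ u, (s, u) ∈ δp
  · obtain ⟨u, hu⟩ := hp
    exact ⟨u, Or.inl hu, fun _ => hu⟩
  · obtain ⟨t, ht⟩ := h
    exact ⟨t, ht, fun hp' => absurd hp' hp⟩

theorem comp2_of_forall_priorityStep {δp δe : Set (α × α)} {σ : ℕ → α}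
    (h : ∀ i, PriorityStep δp δe (σ i) (σ (i + 1))) : Comp2 δp δe σ :=
  ⟨fun i => (h i).1, fun i _ => (h (i + 1)).2⟩

theorem exists_seq_of_forall_reflTransGen_exists {r : α → α → Prop} {s : α}
    (h : ∀ t, Relation.ReflTransGen r s t → ∃ u, r t u) :
    ∃ σ : ℕ → α, σ 0 = s ∧ ∀ i, r (σ i) (σ (i + 1)) := by
  have not_reachable_of_acc : ∀ t, Acc (flip r) t → ¬ Relation.ReflTransGen r s t := by
    intro t hacc
    induction hacc with
    | intro t _ ih =>
      intro ht
      obtain ⟨u, htu⟩ := h t ht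
      exact ih u htu (ht.tail htu)
  exact not_acc_iff_exists_descending_chain.mp fun hacc => not_reachable_of_acc s hacc .refl

theorem exists_comp2_of_forall_reflTransGen_exists {δp δe : Set (α × α)} {s : α}
    (h : ∀ t, Relation.ReflTransGen (fun x y => (x, y) ∈ δp ∪ δe) s t →
      ∃ u, (t, u) ∈ δp ∪ δe) :
    ∃ σ : ℕ → α, σ 0 = s ∧ Comp2 δp δe σ := by
  have hstep : ∀ t, Relation.ReflTransGen (PriorityStep δp δe) s t →
      ∃ u, PriorityStep δp δe t u :=
    fun t ht => exists_priorityStep (h t (Relation.ReflTransGen.mono (fun _ _ hxy => hxy.1) _ _ ht))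
  obtain ⟨σ, hσ₀, hσ⟩ := exists_seq_of_forall_reflTransGen_exists hstep
  exact ⟨σ, hσ₀, comp2_of_forall_priorityStep hσ⟩

theorem stmt1_general (δ'p δe : Set (α × α)) (S S' : Set α)
    (hNoDeadlock : ∀ s ∈ S', ∀ t, Relation.ReflTransGen (fun x y => (x, y) ∈ δ'p ∪ δe) s t →
      ∃ u, (t, u) ∈ δ'p ∪ δe)
    (hInit : ∀ σ : ℕ → α, Comp2 δ'p δe σ → σ 0 ∈ S' → σ 0 ∈ S) :
    S' ⊆ S := by
  intro s hs
  obtain ⟨σ, rfl, hσ⟩ := exists_comp2_of_forall_reflTransGen_exists (hNoDeadlock s hs)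
  exact hInit σ hσ hs

theorem stmt1 (δp δ'p δe : Set (α × α)) (S S' : Set α)
    (hNoDeadlock : ∀ s : α, ∃ t, (s, t) ∈ δ'p ∪ δe)
    (hC1 : ∀ σ : ℕ → α, Comp2 δ'p δe σ → σ 0 ∈ S' → Comp2 δp δe σ ∧ σ 0 ∈ S) :
    S' ⊆ S :=
  stmt1_general δ'p δe S S' (fun _ _ t _ => hNoDeadlock t) fun σ hσ hs => (hC1 σ hσ hs).2
end

section
/- Let δe, δb be relations on a type α and let R ⊆ α satisfy the termination property for δe, δb. Let δ''p be any relation on α with δ''p ∩ δb = ∅ and δ''p ∩ δe = ∅. Let s₀,…,s_n be a p''[]₂δe prefix (with program transitions δ''p) with s_n ∉ R ∪ Rp(R). Then at least one of the following holds: (a) s_n has no outgoing transition in δ''p ∪ δe; (b) there exists s_{n+1} ∉ R ∪ Rp(R) such that s₀,…,s_n,s_{n+1} is a p''[]₂δe prefix; (c) there exist s_{n+1} ∈ Rp(R) \ R and s_{n+2} ∉ R ∪ Rp(R) such that s₀,…,s_n,s_{n+1},s_{n+2} is a p''[]₂δe prefix. -/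
variable {α : Type*}

/-- `Rp δb R` is the set of states outside `R` from which some state of `R`
can be reached by a transition not in `δb`. -/
def Rp (δb : Set (α × α)) (R : Set α) : Set α :=
  {s | s ∉ R ∧ ∃ t ∈ R, (s, t) ∉ δb}

/-- The termination property of the fixed-point set `R`. -/
def TermProp (δe δb : Set (α × α)) (R : Set α) : Prop :=
  ∀ s ∉ R, (∃ u, u ∉ R ∪ Rp δb R ∧ (s, u) ∈ δe) ∨
    ((¬ ∃ t ∈ R ∪ Rp δb R, (s, t) ∈ δe) ∧ s ∉ Rp δb R)

/-- `Prefix2 δp δe σ n`: the finite sequence `σ 0, …, σ n` is a `p[]₂δe` prefix. -/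
def Prefix2 (δp δe : Set (α × α)) (σ : ℕ → α) (n : ℕ) : Prop :=
  (∀ i < n, (σ i, σ (i + 1)) ∈ δp ∪ δe) ∧
  (∀ i, i + 2 ≤ n → (σ i, σ (i + 1)) ∈ δe → (∃ t, (σ (i + 1), t) ∈ δp) →
    (σ (i + 1), σ (i + 2)) ∈ δp)

/-!
The extension is driven by whether `σ n` has a program transition.

If it has one, to `t` say, take it: a program step is always allowed. Since program transitions are
not bad and `σ n` lies outside `R ∪ Rp δb R`, we have `t ∉ R`. If moreover `t ∉ Rp δb R`, this is
the one-step extension. Otherwise the termination property at `t` provides an environment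
transition leaving `R ∪ Rp δb R`; it may be taken because the preceding step was a program step,
and hence, by disjointness, not an environment step.

If `σ n` has only environment transitions, the termination property at `σ n` provides one that
stays outside `R ∪ Rp δb R`; it may be taken because no program transition competes with it.
-/

section TerminationProperty

variable {δe δb : Set (α × α)} {R : Set α} {s t : α}

theorem notMem_of_notMem_union_Rp (hs : s ∉ R ∪ Rp δb R) (hst : (s, t) ∉ δb) : t ∉ R :=
  fun ht => hs (Or.inr ⟨fun hsR => hs (Or.inl hsR), t, ht, hst⟩)

theorem TermProp.exists_env_of_mem_Rp (hR : TermProp δe δb R) (hs : s ∈ Rp δb R) :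
    ∃ u, u ∉ R ∪ Rp δb R ∧ (s, u) ∈ δe :=
  (hR s hs.1).resolve_right fun h => h.2 hs

theorem TermProp.exists_env_of_env (hR : TermProp δe δb R) (hs : s ∉ R) (hst : (s, t) ∈ δe) :
    ∃ u, u ∉ R ∪ Rp δb R ∧ (s, u) ∈ δe :=
  (hR s hs).elim id fun h => ⟨t, fun ht => h.1 ⟨t, ht, hst⟩, hst⟩

end TerminationProperty

theorem update_succ_apply_of_le (σ : ℕ → α) (x : α) {n i : ℕ} (hi : i ≤ n) :
    Function.update σ (n + 1) x i = σ i :=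
  Function.update_of_ne (by lia) x σ

namespace Prefix2

variable {δp δe : Set (α × α)} {σ σ' : ℕ → α} {n : ℕ} {x : α}

theorem congr (h : Prefix2 δp δe σ n) (heq : ∀ i ≤ n, σ' i = σ i) : Prefix2 δp δe σ' n := by
  refine ⟨fun i hi => ?_, fun i hi => ?_⟩
  · rw [heq i (by lia), heq (i + 1) (by lia)]
    exact h.1 i hi
  · rw [heq i (by lia), heq (i + 1) (by lia), heq (i + 2) hi]
    exact h.2 i hi

theorem succ (h : Prefix2 δp δe σ n) (hstep : (σ n, σ (n + 1)) ∈ δp ∪ δe)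
    (hfair : ∀ i, i + 1 = n → (σ i, σ n) ∈ δe → (∃ t, (σ n, t) ∈ δp) →
      (σ n, σ (n + 1)) ∈ δp) :
    Prefix2 δp δe σ (n + 1) := by
  refine ⟨fun i hi => ?_, fun i hi => ?_⟩
  · rcases Nat.lt_succ_iff_lt_or_eq.mp hi with hlt | rfl
    · exact h.1 i hlt
    · exact hstep
  · rcases Nat.le_succ_iff.mp hi with hle | hlast
    · exact h.2 i hle
    · obtain rfl : i + 1 = n := Nat.succ.inj hlast
      exact hfair i rfl

theorem update_succ (h : Prefix2 δp δe σ n) (hstep : (σ n, x) ∈ δp ∪ δe)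
    (hfair : ∀ i, i + 1 = n → (σ i, σ n) ∈ δe → (∃ t, (σ n, t) ∈ δp) → (σ n, x) ∈ δp) :
    Prefix2 δp δe (Function.update σ (n + 1) x) (n + 1) := by
  have hagree : ∀ i ≤ n, Function.update σ (n + 1) x i = σ i :=
    fun _ hi => update_succ_apply_of_le σ x hi
  apply (h.congr hagree).succ <;> rw [Function.update_self, hagree n le_rfl]
  · exact hstep
  · intro i hi
    rw [hagree i (by lia)]
    exact hfair i hi

theorem update_succ_of_program (h : Prefix2 δp δe σ n) (hx : (σ n, x) ∈ δp) :
    Prefix2 δp δe (Function.update σ (n + 1) x) (n + 1) :=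
  h.update_succ (Or.inl hx) fun _ _ _ _ => hx

theorem update_succ_of_env (h : Prefix2 δp δe σ n) (hx : (σ n, x) ∈ δe)
    (hfree : ∀ i, i + 1 = n → (σ i, σ n) ∈ δe → ¬ ∃ t, (σ n, t) ∈ δp) :
    Prefix2 δp δe (Function.update σ (n + 1) x) (n + 1) :=
  h.update_succ (Or.inr hx) fun i hi hie hp => absurd hp (hfree i hi hie)

theorem update_program_env (h : Prefix2 δp δe σ n) (hdisj : Disjoint δp δe) {t u : α}
    (ht : (σ n, t) ∈ δp) (hu : (t, u) ∈ δe) :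
    Prefix2 δp δe (Function.update (Function.update σ (n + 1) t) (n + 2) u) (n + 2) := by
  refine (h.update_succ_of_program ht).update_succ_of_env (by simpa using hu) ?_
  intro i hi hlast_env
  obtain rfl : i = n := Nat.succ.inj hi
  have hte : (σ i, t) ∈ δe := by simpa using hlast_env
  exact absurd hte (hdisj.notMem_of_mem_left ht)

end Prefix2

theorem stmt3 (δe δb δ''p : Set (α × α)) (R : Set α)
    (hR : TermProp δe δb R)
    (hb : δ''p ∩ δb = ∅) (he : δ''p ∩ δe = ∅)
    (σ : ℕ → α) (n : ℕ) (hpre : Prefix2 δ''p δe σ n)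
    (hn : σ n ∉ R ∪ Rp δb R) :
    (¬ ∃ u, (σ n, u) ∈ δ''p ∪ δe) ∨
    (∃ σ' : ℕ → α, (∀ i ≤ n, σ' i = σ i) ∧ Prefix2 δ''p δe σ' (n + 1) ∧
      σ' (n + 1) ∉ R ∪ Rp δb R) ∨
    (∃ σ' : ℕ → α, (∀ i ≤ n, σ' i = σ i) ∧ Prefix2 δ''p δe σ' (n + 2) ∧
      σ' (n + 1) ∈ Rp δb R \ R ∧ σ' (n + 2) ∉ R ∪ Rp δb R) := by
  rw [← Set.disjoint_iff_inter_eq_empty] at hb he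
  by_cases hprog : ∃ t, (σ n, t) ∈ δ''p
  · obtain ⟨t, ht⟩ := hprog
    have htR : t ∉ R := notMem_of_notMem_union_Rp hn (hb.notMem_of_mem_left ht)
    by_cases htRp : t ∈ Rp δb R
    · obtain ⟨u, hu, htu⟩ := hR.exists_env_of_mem_Rp htRp
      refine .inr (.inr ⟨_, fun i hi => ?_, hpre.update_program_env he ht htu, ?_, ?_⟩)
      · rw [update_succ_apply_of_le _ _ (by lia), update_succ_apply_of_le _ _ hi]
      · simpa using ⟨htRp, htR⟩
      · simpa using hu
    · refine .inr (.inl ⟨_, fun _ => update_succ_apply_of_le σ t,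
        hpre.update_succ_of_program ht, ?_⟩)
      simpa using ⟨htR, htRp⟩
  · refine or_iff_not_imp_left.mpr fun hlive => .inl ?_
    obtain ⟨t, ht⟩ := not_not.mp hlive
    have hte : (σ n, t) ∈ δe := ht.resolve_left fun htp => hprog ⟨t, htp⟩
    obtain ⟨u, hu, hue⟩ := hR.exists_env_of_env (fun h => hn (.inl h)) hte
    refine ⟨_, fun _ => update_succ_apply_of_le σ u,
      hpre.update_succ_of_env hue fun _ _ _ => hprog, ?_⟩
    simpa using hu
end

section
/- Let δe, δb be relations on a type α and let R ⊆ α satisfy the termination property for δe, δb. Let δ''p be any relation on α with δ''p ∩ δb = ∅ and δ''p ∩ δe = ∅. Let s₀,…,s_n be a p''[]₂δe prefix with s_n ∉ R ∪ Rp(R). Then either (a) there exists an infinite p''[]₂δe computation σ with σ i = s_i for all i ≤ n and σ i ∉ R for all i ≥ n, or (b) the prefix extends to a p''[]₂δe prefix s₀,…,s_m with m ≥ n, s_i ∉ R for all n ≤ i ≤ m, whose final state s_m has no outgoing transition in δ''p ∪ δe. -/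
variable {α : Type*}

/-!
The adversary follows a positional strategy: outside `Rp` it takes a program transition whenever
there is one, and otherwise an environment transition leaving `R ∪ Rp`. Program transitions are not
bad, so one that starts outside `R ∪ Rp` cannot enter `R`; the termination property supplies the
environment transitions. The fairness constraint never obstructs the strategy: it only binds after
an environment transition, and since program and environment transitions are disjoint, such a
transition was chosen to leave `Rp`, where the strategy gives priority to the program anyway.
-/

theorem exists_maximal_continuation (r : α → α → Prop) (σ : ℕ → α) (n : ℕ) :
    ∃ τ : ℕ → α, (∀ i ≤ n, τ i = σ i) ∧
      ((∀ i, n ≤ i → r (τ i) (τ (i + 1))) ∨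
        ∃ m, n ≤ m ∧ (∀ i, n ≤ i → i < m → r (τ i) (τ (i + 1))) ∧ ¬ ∃ u, r (τ m) u) := by
  classical
  have exists_succ (s : α) : ∃ t, (∃ u, r s u) → r s t := by
    by_cases h : ∃ u, r s u
    · exact h.imp fun _ hu _ => hu
    · exact ⟨s, fun h' => absurd h' h⟩
  choose next hnext using exists_succ
  let τ : ℕ → α := fun i => next^[i - n] (σ (min i n))
  have τ_step (i : ℕ) (hi : n ≤ i) (hlive : ∃ u, r (τ i) u) : r (τ i) (τ (i + 1)) := by
    have τ_succ : τ (i + 1) = next (τ i) := by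
      simp only [τ, Nat.succ_sub hi, Function.iterate_succ_apply', min_eq_right hi,
        min_eq_right (Nat.le_succ_of_le hi)]
    exact τ_succ ▸ hnext (τ i) hlive
  refine ⟨τ, fun i hi => by simp [τ, hi], ?_⟩
  by_cases hstuck : ∃ m, n ≤ m ∧ ¬ ∃ u, r (τ m) u
  · obtain ⟨hnm, hm⟩ := Nat.find_spec hstuck
    refine .inr ⟨Nat.find hstuck, hnm, fun i hi him => τ_step i hi ?_, hm⟩
    exact not_not.mp fun hlive => Nat.find_min hstuck him ⟨hi, hlive⟩
  · exact .inl fun i hi => τ_step i hi (not_not.mp fun hlive => hstuck ⟨i, hi, hlive⟩)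

theorem Prefix2.congr_s4 {δp δe : Set (α × α)} {σ τ : ℕ → α} {n : ℕ} (hσ : Prefix2 δp δe σ n)
    (hτ : ∀ i ≤ n, τ i = σ i) : Prefix2 δp δe τ n := by
  refine ⟨fun i hi => ?_, fun i hi => ?_⟩
  · rw [hτ i (by omega), hτ (i + 1) (by omega)]
    exact hσ.1 i hi
  · rw [hτ i (by omega), hτ (i + 1) (by omega), hτ (i + 2) hi]
    exact hσ.2 i hi

theorem comp2_of_forall_prefix2 {δp δe : Set (α × α)} {σ : ℕ → α}
    (h : ∀ n, Prefix2 δp δe σ n) : Comp2 δp δe σ :=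
  ⟨fun i => (h (i + 1)).1 i i.lt_succ_self, fun i => (h (i + 2)).2 i le_rfl⟩

/-- The transitions of the adversary's strategy for staying outside `R`: a program transition from
a state outside `Rp δb R`, or, from a state where that is not possible, an environment transition
to a state outside `R ∪ Rp δb R`. The source is meant to lie outside `R`; this is not part of the
definition. -/
def AvoidingStep (δp δe δb : Set (α × α)) (R : Set α) (s t : α) : Prop :=
  (s ∉ Rp δb R ∧ (s, t) ∈ δp) ∨
    ((s ∈ Rp δb R ∨ ¬ ∃ u, (s, u) ∈ δp) ∧ (s, t) ∈ δe ∧ t ∉ R ∪ Rp δb R)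

section AvoidingStep

variable {δp δe δb : Set (α × α)} {R : Set α} {s t : α} {τ : ℕ → α} {n m : ℕ}

theorem TermProp.exists_avoidingStep (hR : TermProp δe δb R) (hs : s ∉ R)
    (hlive : ∃ u, (s, u) ∈ δp ∪ δe) : ∃ t, AvoidingStep δp δe δb R s t := by
  by_cases hprog : s ∉ Rp δb R ∧ ∃ u, (s, u) ∈ δp
  · obtain ⟨hsRp, u, hu⟩ := hprog
    exact ⟨u, .inl ⟨hsRp, hu⟩⟩
  have hblocked : s ∈ Rp δb R ∨ ¬ ∃ u, (s, u) ∈ δp := by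
    rwa [not_and_or, not_not] at hprog
  rcases hR s hs with ⟨u, hu, hsu⟩ | ⟨henv, hsRp⟩
  · exact ⟨u, .inr ⟨hblocked, hsu, hu⟩⟩
  · obtain ⟨u, hsu | hsu⟩ := hlive
    · exact absurd ⟨hsRp, u, hsu⟩ hprog
    · exact ⟨u, .inr ⟨hblocked, hsu, fun hu => henv ⟨u, hu, hsu⟩⟩⟩

namespace AvoidingStep

theorem mem_union (h : AvoidingStep δp δe δb R s t) : (s, t) ∈ δp ∪ δe :=
  h.imp And.right fun henv => henv.2.1

theorem notMem (h : AvoidingStep δp δe δb R s t) (hb : Disjoint δp δb) (hs : s ∉ R) :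
    t ∉ R := by
  rcases h with ⟨hsRp, hst⟩ | ⟨-, -, ht⟩
  · exact fun ht => hsRp ⟨hs, t, ht, Set.disjoint_left.mp hb hst⟩
  · exact fun htR => ht (.inl htR)

theorem notMem_Rp_of_mem_env (h : AvoidingStep δp δe δb R s t) (he : Disjoint δp δe)
    (hst : (s, t) ∈ δe) : t ∉ Rp δb R := by
  rcases h with ⟨-, hprog⟩ | ⟨-, -, ht⟩
  · exact absurd hst (Set.disjoint_left.mp he hprog)
  · exact fun htRp => ht (.inr htRp)

theorem mem_program (h : AvoidingStep δp δe δb R s t) (hs : s ∉ Rp δb R)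
    (hprog : ∃ u, (s, u) ∈ δp) : (s, t) ∈ δp := by
  rcases h with ⟨-, hst⟩ | ⟨hsRp | hnone, -⟩
  · exact hst
  · exact absurd hsRp hs
  · exact absurd hprog hnone

end AvoidingStep

theorem notMem_of_forall_avoidingStep (hb : Disjoint δp δb) (hn : τ n ∉ R) (hnm : n ≤ m)
    (hstep : ∀ i, n ≤ i → i < m → AvoidingStep δp δe δb R (τ i) (τ (i + 1))) : τ m ∉ R := by
  induction m, hnm using Nat.le_induction with
  | base => exact hn
  | succ k hnk ih =>
    exact (hstep k hnk k.lt_succ_self).notMem hb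
      (ih fun i hi hik => hstep i hi (Nat.lt_succ_of_lt hik))

theorem Prefix2.extend_of_avoidingStep (hpre : Prefix2 δp δe τ n) (he : Disjoint δp δe)
    (hn : τ n ∉ Rp δb R)
    (hstep : ∀ i, n ≤ i → i < m → AvoidingStep δp δe δb R (τ i) (τ (i + 1))) :
    Prefix2 δp δe τ m := by
  refine ⟨fun i him => ?_, fun i him henv hprog => ?_⟩
  · rcases lt_or_ge i n with hin | hni
    · exact hpre.1 i hin
    · exact (hstep i hni him).mem_union
  · rcases Nat.lt_or_ge (i + 1) n with hin | hni
    · exact hpre.2 i hin henv hprog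
    · have hRp : τ (i + 1) ∉ Rp δb R := by
        rcases hni.eq_or_lt with rfl | hlt
        · exact hn
        · exact (hstep i (by omega) (by omega)).notMem_Rp_of_mem_env he henv
      exact (hstep (i + 1) hni him).mem_program hRp hprog

end AvoidingStep

theorem stmt4 (δe δb δ''p : Set (α × α)) (R : Set α)
    (hR : TermProp δe δb R)
    (hb : δ''p ∩ δb = ∅) (he : δ''p ∩ δe = ∅)
    (σ : ℕ → α) (n : ℕ) (hpre : Prefix2 δ''p δe σ n)
    (hn : σ n ∉ R ∪ Rp δb R) :
    (∃ σ' : ℕ → α, (∀ i ≤ n, σ' i = σ i) ∧ Comp2 δ''p δe σ' ∧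
      ∀ i, n ≤ i → σ' i ∉ R) ∨
    (∃ m, n ≤ m ∧ ∃ σ' : ℕ → α, (∀ i ≤ n, σ' i = σ i) ∧
      Prefix2 δ''p δe σ' m ∧ (∀ i, n ≤ i → i ≤ m → σ' i ∉ R) ∧
      ¬ ∃ u, (σ' m, u) ∈ δ''p ∪ δe) := by
  have hb' : Disjoint δ''p δb := Set.disjoint_iff_inter_eq_empty.mpr hb
  have he' : Disjoint δ''p δe := Set.disjoint_iff_inter_eq_empty.mpr he
  obtain ⟨hnR, hnRp⟩ := not_or.mp hn
  obtain ⟨τ, hτ, hmax⟩ := exists_maximal_continuation (AvoidingStep δ''p δe δb R) σ n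
  rw [← hτ n le_rfl] at hnR hnRp
  have hpre' : Prefix2 δ''p δe τ n := hpre.congr_s4 hτ
  rcases hmax with hstep | ⟨m, hnm, hstep, hstuck⟩
  · refine .inl ⟨τ, hτ, comp2_of_forall_prefix2 fun m => ?_, fun i hi => ?_⟩
    · exact hpre'.extend_of_avoidingStep he' hnRp fun i hi _ => hstep i hi
    · exact notMem_of_forall_avoidingStep hb' hnR hi fun j hj _ => hstep j hj
  · have havoid : ∀ i, n ≤ i → i ≤ m → τ i ∉ R := fun i hi him =>
      notMem_of_forall_avoidingStep hb' hnR hi fun j hj hji => hstep j hj (hji.trans_le him)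
    exact .inr ⟨m, hnm, τ, hτ, hpre'.extend_of_avoidingStep he' hnRp hstep, havoid,
      fun hlive => hstuck (hR.exists_avoidingStep (havoid m hnm le_rfl) hlive)⟩
end

section
/- Let δb be a relation on a type α and Rank : α → ℕ∞ a function such that for all s, t, if (s,t) ∉ δb then Rank s ≤ Rank t + 1. Let δ''p be a relation on α with δ''p ∩ δb = ∅. Let σ : ℕ → α be a sequence and j an index such that (σ l, σ (l+1)) ∈ δ''p for all l ≥ j, and suppose Rank (σ j) = m where m is finite and m ≥ 1. Then either there exists i > j with Rank (σ i) = m − 1, or Rank (σ i) ≥ m for all i ≥ j. -/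
variable {α : Type*}

theorem lt_of_forall_le_succ_of_forall_ne {β : Type*} [LinearOrder β] [SuccOrder β]
    {f : ℕ → β} {j : ℕ} {c : β} (hf : ∀ l, j ≤ l → f l ≤ Order.succ (f (l + 1)))
    (hj : c < f j) (hne : ∀ i, j < i → f i ≠ c) {i : ℕ} (hi : j ≤ i) : c < f i := by
  induction i, hi using Nat.le_induction with
  | base => exact hj
  | succ l hl ih =>
    have hle : c ≤ f (l + 1) := Order.le_of_lt_succ (ih.trans_le (hf l hl))
    exact hle.lt_of_ne' (hne (l + 1) (Nat.lt_succ_of_le hl))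

theorem stmt9_general {β : Type*} [LinearOrder β] [SuccOrder β]
    (δb δ''p : Set (α × α)) (Rank : α → β)
    (hRank : ∀ s t, (s, t) ∉ δb → Rank s ≤ Order.succ (Rank t))
    (hb : δ''p ∩ δb = ∅)
    (σ : ℕ → α) (j : ℕ) (hstep : ∀ l, j ≤ l → (σ l, σ (l + 1)) ∈ δ''p)
    (c : β) (hj : c < Rank (σ j)) :
    (∃ i, j < i ∧ Rank (σ i) = c) ∨ (∀ i, j ≤ i → c < Rank (σ i)) := by
  have hdisj : Disjoint δ''p δb := Set.disjoint_iff_inter_eq_empty.mpr hb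
  have hdrop : ∀ l, j ≤ l → Rank (σ l) ≤ Order.succ (Rank (σ (l + 1))) := fun l hl =>
    hRank _ _ (hdisj.notMem_of_mem_left (hstep l hl))
  refine or_iff_not_imp_left.mpr fun hmiss i hi => ?_
  exact lt_of_forall_le_succ_of_forall_ne (f := Rank ∘ σ) hdrop hj
    (fun k hk hkc => hmiss ⟨k, hk, hkc⟩) hi

theorem stmt9 (δb δ''p : Set (α × α)) (Rank : α → ℕ∞)
    (hRank : ∀ s t, (s, t) ∉ δb → Rank s ≤ Rank t + 1)
    (hb : δ''p ∩ δb = ∅)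
    (σ : ℕ → α) (j : ℕ) (hstep : ∀ l, j ≤ l → (σ l, σ (l + 1)) ∈ δ''p)
    (m : ℕ) (hm : 1 ≤ m) (hj : Rank (σ j) = (m : ℕ∞)) :
    (∃ i, j < i ∧ Rank (σ i) = ((m - 1 : ℕ) : ℕ∞)) ∨
    (∀ i, j ≤ i → (m : ℕ∞) ≤ Rank (σ i)) := by
  obtain ⟨k, rfl⟩ := Nat.exists_eq_add_of_le' hm
  have hk : (k : ℕ∞) < Rank (σ j) := hj ▸ Nat.cast_lt.mpr k.lt_succ_self
  have hsucc : ∀ s t, (s, t) ∉ δb → Rank s ≤ Order.succ (Rank t) := by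
    simpa only [Order.succ_eq_add_one] using hRank
  exact (stmt9_general δb δ''p Rank hsucc hb σ j hstep k hk).imp_right
    fun h i hi => Order.add_one_le_of_lt (h i hi)
end

section
/- Let δe, δb, δr, f be relations on a type α and (ms₁, ms₂) the least pair of subsets of α closed under rules (R1)–(R6). Let δ''p be a relation on α with δ''p ∩ δb = ∅, δ''p ∩ δr = ∅, δ''p ∩ δe = ∅, and f ∩ δe = ∅, and let S'' ⊆ α be such that every p''[]₂δe[]f prefix whose initial state lies in S'' contains no step in δb. Then S'' ∩ ms₂ = ∅. -/
variable {α : Type*}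

/-- The closure rules (R1)–(R6) computed by the failsafe fault-tolerance
addition algorithm, for a pair of sets `(ms₁, ms₂)`. -/
def ClosedMS (δe δb δr f : Set (α × α)) (ms₁ ms₂ : Set α) : Prop :=
  -- (R1)
  (∀ s t, (s, t) ∈ f → (s, t) ∈ δb → s ∈ ms₁) ∧
  -- (R2)
  (ms₁ ⊆ ms₂) ∧
  -- (R3)
  (∀ s t, (s, t) ∈ δe → (s, t) ∈ δb → s ∈ ms₂) ∧
  -- (R4)
  (∀ s t, (s, t) ∈ f → t ∈ ms₂ → s ∈ ms₁) ∧
  -- (R5)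
  (∀ s, (∃ t, ((s, t) ∈ δe ∧ t ∈ ms₁) ∨ ((s, t) ∈ δe ∧ (s, t) ∈ δb)) →
    (∀ u, (s, u) ∈ δb ∨ (s, u) ∈ δr ∨ u ∈ ms₂) → s ∈ ms₁) ∧
  -- (R6)
  (∀ s t, (s, t) ∈ δe → t ∈ ms₁ → s ∈ ms₂)

/-- `(ms₁, ms₂)` is the least pair of sets closed under rules (R1)–(R6). -/
def LeastMS (δe δb δr f : Set (α × α)) (ms₁ ms₂ : Set α) : Prop :=
  ClosedMS δe δb δr f ms₁ ms₂ ∧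
  ∀ ms₁' ms₂', ClosedMS δe δb δr f ms₁' ms₂' → ms₁ ⊆ ms₁' ∧ ms₂ ⊆ ms₂'

/-- `PrefixF δp δe f σ n`: the finite sequence `σ 0, …, σ n` is a `p[]₂δe[]f` prefix. -/
def PrefixF (δp δe f : Set (α × α)) (σ : ℕ → α) (n : ℕ) : Prop :=
  (∀ i < n, (σ i, σ (i + 1)) ∈ δp ∪ δe ∪ f) ∧
  (∀ i, i + 2 ≤ n → (σ i, σ (i + 1)) ∈ δe → (∃ t, (σ (i + 1), t) ∈ δp) →
    (σ (i + 1), σ (i + 2)) ∈ δp ∪ f)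

/-!
Read `ms₂` as the states from which some prefix takes a bad step, and `ms₁` as those from which such
a prefix may moreover come right after an environment step. These two sets are closed under
(R1)–(R6), so they contain the least closed pair: every state of `ms₂` starts a prefix with a bad
step, which a safe invariant rules out. The delicate rule is (R5). If the program can move at `s`,
its move is bad or leads to `ms₂`, and is legal after an environment step; if it cannot, the
environment may move twice in a row, so the bad prefix starting with the environment step serves.
-/

section ViolatingPrefixes

/-- The sequence `s, σ 0, σ 1, …`, for extending a prefix by one step at its start. -/
def consSeq (s : α) (σ : ℕ → α) : ℕ → α
  | 0 => s
  | n + 1 => σ n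

/-- The step from `s` to `t` may come right after an environment step into `s`: the environment
does not move again if the program can. -/
def CanFollowEnv (δp f : Set (α × α)) (s t : α) : Prop :=
  (∃ u, (s, u) ∈ δp) → (s, t) ∈ δp ∪ f

/-- The sequence `σ 0, …, σ n` is a `p[]₂δe[]f` prefix that violates safety, i.e. one of its steps
lies in `δb`. In particular `0 < n`, so its first step runs from `σ 0` to `σ 1`. -/
def ViolatingPrefix (δp δe δb f : Set (α × α)) (σ : ℕ → α) (n : ℕ) : Prop :=
  PrefixF δp δe f σ n ∧ ∃ i < n, (σ i, σ (i + 1)) ∈ δb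

/-- The states at which a violating prefix starts; an upper bound for `ms₂`. -/
def violatingStates (δp δe δb f : Set (α × α)) : Set α :=
  {s | ∃ σ n, σ 0 = s ∧ ViolatingPrefix δp δe δb f σ n}

/-- The states at which a violating prefix starts whose first step may come right after an
environment step; an upper bound for `ms₁`. -/
def violatingStatesAfterEnv (δp δe δb f : Set (α × α)) : Set α :=
  {s | ∃ σ n, σ 0 = s ∧ ViolatingPrefix δp δe δb f σ n ∧ CanFollowEnv δp f (σ 0) (σ 1)}

variable {δp δe δb δr f : Set (α × α)} {s t : α} {σ : ℕ → α} {n : ℕ}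

lemma prefixF_one (hstep : (σ 0, σ 1) ∈ δp ∪ δe ∪ f) : PrefixF δp δe f σ 1 := by
  refine ⟨fun i hi => ?_, fun i hi => by omega⟩
  obtain rfl : i = 0 := by omega
  exact hstep

lemma PrefixF.cons (hσ : PrefixF δp δe f σ n) (hstep : (s, σ 0) ∈ δp ∪ δe ∪ f)
    (hfollow : (s, σ 0) ∈ δe → CanFollowEnv δp f (σ 0) (σ 1)) :
    PrefixF δp δe f (consSeq s σ) (n + 1) := by
  constructor
  · rintro (_ | i) hi
    · exact hstep
    · exact hσ.1 i (by omega)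
  · rintro (_ | i) hi
    · exact hfollow
    · exact hσ.2 i (by omega)

lemma violatingPrefix_one (hstep : (s, t) ∈ δp ∪ δe ∪ f) (hbad : (s, t) ∈ δb) :
    ViolatingPrefix δp δe δb f (consSeq s fun _ => t) 1 :=
  ⟨prefixF_one hstep, 0, one_pos, hbad⟩

lemma ViolatingPrefix.cons (hσ : ViolatingPrefix δp δe δb f σ n)
    (hstep : (s, σ 0) ∈ δp ∪ δe ∪ f)
    (hfollow : (s, σ 0) ∈ δe → CanFollowEnv δp f (σ 0) (σ 1)) :
    ViolatingPrefix δp δe δb f (consSeq s σ) (n + 1) := by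
  obtain ⟨hprefix, i, hi, hbad⟩ := hσ
  exact ⟨hprefix.cons hstep hfollow, i + 1, Nat.succ_lt_succ hi, hbad⟩

lemma violatingStatesAfterEnv_subset :
    violatingStatesAfterEnv δp δe δb f ⊆ violatingStates δp δe δb f :=
  fun _ ⟨σ, n, h0, hσ, _⟩ => ⟨σ, n, h0, hσ⟩

lemma mem_violatingStates_of_env_bad (he : (s, t) ∈ δe) (hbad : (s, t) ∈ δb) :
    s ∈ violatingStates δp δe δb f :=
  ⟨_, _, rfl, violatingPrefix_one (.inl (.inr he)) hbad⟩

lemma mem_violatingStates_of_env (he : (s, t) ∈ δe)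
    (ht : t ∈ violatingStatesAfterEnv δp δe δb f) : s ∈ violatingStates δp δe δb f := by
  obtain ⟨σ, n, rfl, hσ, hfollow⟩ := ht
  exact ⟨_, _, rfl, hσ.cons (.inl (.inr he)) fun _ => hfollow⟩

lemma mem_violatingStatesAfterEnv_of_bad (hstep : (s, t) ∈ δp ∪ f) (hbad : (s, t) ∈ δb) :
    s ∈ violatingStatesAfterEnv δp δe δb f :=
  ⟨_, _, rfl, violatingPrefix_one (Set.union_subset_union_left f Set.subset_union_left hstep) hbad,
    fun _ => hstep⟩

lemma mem_violatingStatesAfterEnv_of_notMem_env (hstep : (s, t) ∈ δp ∪ f) (hne : (s, t) ∉ δe)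
    (ht : t ∈ violatingStates δp δe δb f) : s ∈ violatingStatesAfterEnv δp δe δb f := by
  obtain ⟨σ, n, rfl, hσ⟩ := ht
  exact ⟨_, _, rfl, hσ.cons (Set.union_subset_union_left f Set.subset_union_left hstep)
    fun he => absurd he hne, fun _ => hstep⟩

lemma mem_violatingStatesAfterEnv_of_program_blocked (hblocked : ¬∃ u, (s, u) ∈ δp)
    (hs : s ∈ violatingStates δp δe δb f) : s ∈ violatingStatesAfterEnv δp δe δb f := by
  obtain ⟨σ, n, rfl, hσ⟩ := hs
  exact ⟨σ, n, rfl, hσ, fun hmove => absurd hmove hblocked⟩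

lemma mem_violatingStatesAfterEnv_of_forall_step (hpr : Disjoint δp δr) (hpe : Disjoint δp δe)
    (hs : s ∈ violatingStates δp δe δb f)
    (hmoves : ∀ u, (s, u) ∈ δb ∨ (s, u) ∈ δr ∨ u ∈ violatingStates δp δe δb f) :
    s ∈ violatingStatesAfterEnv δp δe δb f := by
  by_cases hmove : ∃ u, (s, u) ∈ δp
  · obtain ⟨u, hp⟩ := hmove
    rcases hmoves u with hbad | hr | hu
    · exact mem_violatingStatesAfterEnv_of_bad (.inl hp) hbad
    · exact absurd hr (hpr.notMem_of_mem_left hp)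
    · exact mem_violatingStatesAfterEnv_of_notMem_env (.inl hp) (hpe.notMem_of_mem_left hp) hu
  · exact mem_violatingStatesAfterEnv_of_program_blocked hmove hs

lemma closedMS_violatingStates (hpr : Disjoint δp δr) (hpe : Disjoint δp δe)
    (hfe : Disjoint f δe) :
    ClosedMS δe δb δr f (violatingStatesAfterEnv δp δe δb f) (violatingStates δp δe δb f) := by
  refine ⟨?R1, violatingStatesAfterEnv_subset, ?R3, ?R4, ?R5, ?R6⟩
  case R1 => exact fun s t hf hbad => mem_violatingStatesAfterEnv_of_bad (.inr hf) hbad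
  case R3 => exact fun s t he hbad => mem_violatingStates_of_env_bad he hbad
  case R4 =>
    exact fun s t hf ht =>
      mem_violatingStatesAfterEnv_of_notMem_env (.inr hf) (hfe.notMem_of_mem_left hf) ht
  case R5 =>
    rintro s ⟨t, henv⟩ hmoves
    have hs : s ∈ violatingStates δp δe δb f := by
      rcases henv with ⟨he, ht⟩ | ⟨he, hbad⟩
      · exact mem_violatingStates_of_env he ht
      · exact mem_violatingStates_of_env_bad he hbad
    exact mem_violatingStatesAfterEnv_of_forall_step hpr hpe hs hmoves
  case R6 => exact fun s t he ht => mem_violatingStates_of_env he ht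

end ViolatingPrefixes

theorem stmt14_general {δe δb δr f δp : Set (α × α)} {ms₁ ms₂ : Set α}
    (hms : LeastMS δe δb δr f ms₁ ms₂)
    (hpr : Disjoint δp δr) (hpe : Disjoint δp δe) (hfe : Disjoint f δe) {S : Set α}
    (hSafe : ∀ (σ : ℕ → α) (n : ℕ), PrefixF δp δe f σ n → σ 0 ∈ S →
      ∀ i < n, (σ i, σ (i + 1)) ∉ δb) :
    Disjoint S ms₂ := by
  rw [Set.disjoint_left]
  intro s hS hs
  have hviolating : s ∈ violatingStates δp δe δb f :=
    (hms.2 _ _ (closedMS_violatingStates hpr hpe hfe)).2 hs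
  obtain ⟨σ, n, rfl, hprefix, i, hi, hbad⟩ := hviolating
  exact hSafe σ n hprefix hS i hi hbad

theorem stmt14 (δe δb δr f δ''p : Set (α × α)) (ms₁ ms₂ : Set α)
    (hms : LeastMS δe δb δr f ms₁ ms₂)
    (hpb : δ''p ∩ δb = ∅) (hpr : δ''p ∩ δr = ∅)
    (hpe : δ''p ∩ δe = ∅) (hfe : f ∩ δe = ∅)
    (S'' : Set α)
    (hSafe : ∀ (σ : ℕ → α) (n : ℕ), PrefixF δ''p δe f σ n → σ 0 ∈ S'' →
      ∀ i < n, (σ i, σ (i + 1)) ∉ δb) :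
    S'' ∩ ms₂ = ∅ := by
  rw [← Set.disjoint_iff_inter_eq_empty] at hpr hpe hfe ⊢
  exact stmt14_general hms hpr hpe hfe hSafe
end

section
/- Let δ'p, δe, δb be relations on a type α and S ⊆ α. Suppose every state of α has some outgoing transition in δ'p ∪ δe, and suppose there exist states s₀, s₁ with (s₀,s₁) ∈ δe and (s₀,s₁) ∈ δb. Then there exists an infinite p'[]₂δe computation σ (with program transitions δ'p) such that σ 0 = s₀ and σ 1 = s₁; consequently p'[]₂δe is not δb-safe stabilizing for invariant S. -/
variable {α : Type*}

/-- `p[]₂δe` is `δb`-safe stabilizing for invariant `S`. -/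
def SafeStab (δp δe δb : Set (α × α)) (S : Set α) : Prop :=
  (∀ s t, s ∈ S → (s, t) ∈ δp ∪ δe → t ∈ S) ∧
  (∀ σ : ℕ → α, Comp2 δp δe σ → ∀ i, (σ i, σ (i + 1)) ∉ δb) ∧
  (∀ σ : ℕ → α, Comp2 δp δe σ → ∃ i, σ i ∈ S)

section

variable {δp δe δb : Set (α × α)} {S : Set α} {σ : ℕ → α} {s s₀ s₁ : α}

/-- A transition from `s` to `t` that gives priority to the program: the environment moves only
where the program is disabled. A sequence of such transitions meets the fairness condition of
`Comp2` whatever transition came before it. -/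
def IsProgramPriorityStep (δp δe : Set (α × α)) (s t : α) : Prop :=
  (s, t) ∈ δp ∪ δe ∧ ((∃ u, (s, u) ∈ δp) → (s, t) ∈ δp)

theorem exists_isProgramPriorityStep (h : ∃ t, (s, t) ∈ δp ∪ δe) :
    ∃ t, IsProgramPriorityStep δp δe s t := by
  by_cases enabled : ∃ u, (s, u) ∈ δp
  · obtain ⟨u, hu⟩ := enabled
    exact ⟨u, Or.inl hu, fun _ ↦ hu⟩
  · obtain ⟨t, ht⟩ := h
    exact ⟨t, ht, fun h ↦ absurd h enabled⟩

theorem comp2_of_isProgramPriorityStep_succ (h_zero : (σ 0, σ 1) ∈ δp ∪ δe)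
    (h_succ : ∀ i, IsProgramPriorityStep δp δe (σ (i + 1)) (σ (i + 2))) :
    Comp2 δp δe σ := by
  refine ⟨fun i ↦ ?_, fun i _ ↦ (h_succ i).2⟩
  cases i with
  | zero => exact h_zero
  | succ i => exact (h_succ i).1

theorem exists_comp2_of_mem (no_deadlock : ∀ s, ∃ t, (s, t) ∈ δp ∪ δe)
    (h : (s₀, s₁) ∈ δp ∪ δe) :
    ∃ σ : ℕ → α, Comp2 δp δe σ ∧ σ 0 = s₀ ∧ σ 1 = s₁ := by
  choose next h_next using fun s ↦ exists_isProgramPriorityStep (no_deadlock s)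
  let σ : ℕ → α
    | 0 => s₀
    | n + 1 => next^[n] s₁
  have σ_step (i : ℕ) : σ (i + 2) = next (σ (i + 1)) := Function.iterate_succ_apply' next i s₁
  refine ⟨σ, comp2_of_isProgramPriorityStep_succ h fun i ↦ ?_, rfl, rfl⟩
  rw [σ_step]
  exact h_next _

theorem Comp2.not_safeStab (hσ : Comp2 δp δe σ) {i : ℕ} (hbad : (σ i, σ (i + 1)) ∈ δb) :
    ¬ SafeStab δp δe δb S :=
  fun ⟨_, safe, _⟩ ↦ safe σ hσ i hbad

end

theorem stmt17 (δ'p δe δb : Set (α × α)) (S : Set α)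
    (hNoDeadlock : ∀ s : α, ∃ t, (s, t) ∈ δ'p ∪ δe)
    (s₀ s₁ : α) (he : (s₀, s₁) ∈ δe) (hbad : (s₀, s₁) ∈ δb) :
    (∃ σ : ℕ → α, Comp2 δ'p δe σ ∧ σ 0 = s₀ ∧ σ 1 = s₁) ∧
    ¬ SafeStab δ'p δe δb S := by
  obtain ⟨σ, hσ, rfl, rfl⟩ := exists_comp2_of_mem hNoDeadlock (Or.inr he)
  exact ⟨⟨σ, hσ, rfl, rfl⟩, hσ.not_safeStab hbad⟩
end
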